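/- arXiv:2306.13053 — 5 statements merged into one kernel-verified Lean document; each statement's English description precedes it below -/
import Mathlib

section
/- In a context-lumpable bandit with mean rewards in [0,1], fix ε > 0 and for each block b ∈ [r] set ε_b = max{1, 1/√(r·ω(b))}·ε. Let C > 0 and let W ⊆ [K] be a set of arms such that for every block b ∈ [r] with ω(b) ≥ ε/r there exists j ∈ W with max_{j'∈[K]} μ(b,j') − μ(b,j) ≤ C·ε_b. Suppose a policy π : [S] → [K] satisfies A(i, π(i)) ≥ max_{j∈W} A(i,j) − ε for every i ∈ [S]. Then Σ_{i∈[S]} ν(i)·(max_{j∈[K]} A(i,j) − A(i, π(i))) ≤ 2(C+1)·ε. -/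
open scoped BigOperators

/-!
On a block `b` with `ω b < ε / r` the gap of `π` is at most `1`, since rewards lie in `[0,1]`; on
any other block it is at most `C * εb b + ε`, by comparison with the good arm of `W`. Summing over
contexts block by block, the light blocks cost at most `r * (ε / r) = ε` and the additive `ε` costs
`ε`. The remaining cost is `C * ε * ∑ b, ω b * max 1 (1 / √(r * ω b))`, and this sum is at most `2`:
by `mul_max_inv_sqrt_le` each term is at most `ω b + (ω b + 1 / r) / 2`, which is AM-GM applied to
`√(ω b / r)`, and these bounds sum to `2`.
-/

/-- AM-GM in the form `w / √(r * w) = √(w / r) ≤ (w + 1 / r) / 2`, after bounding the maximum by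
the sum. It also covers `w = 0`, where the reciprocal is `0` by convention. -/
lemma mul_max_inv_sqrt_le (r w : ℝ) (hr : 0 < r) (hw : 0 ≤ w) :
    w * max 1 (1 / Real.sqrt (r * w)) ≤ w + (w + 1 / r) / 2 := by
  have hmax : max 1 (1 / Real.sqrt (r * w)) ≤ 1 + 1 / Real.sqrt (r * w) :=
    max_le (by linarith [show 0 ≤ 1 / Real.sqrt (r * w) by positivity]) (by linarith)
  have key : w * (1 / Real.sqrt (r * w)) ≤ (w + 1 / r) / 2 := by
    rcases hw.eq_or_lt with rfl | hw'
    · simp only [zero_mul]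
      positivity
    · have hs : 0 < Real.sqrt (r * w) := Real.sqrt_pos.mpr (by positivity)
      have hsq := Real.sq_sqrt (show 0 ≤ r * w by positivity)
      set s := Real.sqrt (r * w)
      have hws : w = s ^ 2 / r := by rw [hsq]; field_simp
      have h1 : w * (1 / s) = s / r := by rw [hws]; field_simp
      have h2 : (w + 1 / r) / 2 = ((s ^ 2 + 1) / 2) / r := by rw [hws]; field_simp
      rw [h1, h2]
      gcongr
      nlinarith [sq_nonneg (s - 1)]
  nlinarith [mul_le_mul_of_nonneg_left hmax hw]

/-- Lemma C.1: in a context-lumpable bandit with rewards in `[0,1]`, if the candidate set `W`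
contains a `C·ε_b`-optimal arm for every block `b` with `ω(b) ≥ ε/r`, and `π` is `ε`-optimal
with respect to the arms in `W` for every context, then `π` is `2(C+1)·ε`-optimal overall. -/
theorem stmt3 (S K r : ℕ) (hS : 0 < S) (hK : 0 < K) (hr : 0 < r)
    (A : Fin S → Fin K → ℝ) (hA0 : ∀ i j, 0 ≤ A i j) (hA1 : ∀ i j, A i j ≤ 1)
    (ν : Fin S → ℝ) (hν0 : ∀ i, 0 ≤ ν i) (hν1 : ∑ i, ν i = 1)
    (g : Fin S → Fin r)
    (hlump : ∀ i i', g i = g i' → A i = A i')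
    (μ : Fin r → Fin K → ℝ) (hμ : ∀ i j, μ (g i) j = A i j)
    (ω : Fin r → ℝ) (hω : ∀ b, ω b = ∑ i, if g i = b then ν i else 0)
    (ε : ℝ) (hε : 0 < ε)
    (εb : Fin r → ℝ)
    (hεb : ∀ b, εb b = max 1 (1 / Real.sqrt (r * ω b)) * ε)
    (C : ℝ) (hC : 0 < C)
    (W : Finset (Fin K))
    (hW : ∀ b : Fin r, ε / r ≤ ω b →
      ∃ j ∈ W, ∀ j' : Fin K, μ b j' - μ b j ≤ C * εb b)
    (π : Fin S → Fin K)
    (hπ : ∀ i, ∀ j ∈ W, A i j - ε ≤ A i (π i)) :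
    ∑ i, ν i * ((⨆ j, A i j) - A i (π i)) ≤ 2 * (C + 1) * ε := by
  have hr' : (0 : ℝ) < r := by exact_mod_cast hr
  haveI : Nonempty (Fin K) := ⟨⟨0, hK⟩⟩
  have hω0 : ∀ b, 0 ≤ ω b := by
    intro b
    rw [hω]
    refine Finset.sum_nonneg fun i _ => ?_
    split_ifs
    exacts [hν0 i, le_rfl]
  have hblock : ∀ c : Fin r → ℝ, ∑ i, ν i * c (g i) = ∑ b, ω b * c b := by
    intro c
    simp only [hω, Finset.sum_mul, ite_mul, zero_mul]
    rw [Finset.sum_comm]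
    simp
  have hω1 : ∑ b, ω b = 1 := by
    have := hblock fun _ => 1
    simp only [mul_one] at this
    rw [← this, hν1]
  -- The gap of `π` is bounded by a quantity depending only on the block.
  have hgap : ∀ i, (⨆ j, A i j) - A i (π i) ≤
      if ε / r ≤ ω (g i) then C * εb (g i) + ε else 1 := by
    intro i
    rw [sub_le_iff_le_add]
    refine ciSup_le fun j' => ?_
    split_ifs with h
    · obtain ⟨j, hj, hopt⟩ := hW (g i) h
      have h1 := hopt j'
      rw [hμ, hμ] at h1
      linarith [hπ i j hj]
    · linarith [hA1 i j', hA0 i (π i)]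
  have hterm : ∀ b, ω b * (if ε / r ≤ ω b then C * εb b + ε else 1) ≤
      ε / r + ω b * ε + C * ε * (ω b + (ω b + 1 / r) / 2) := by
    intro b
    have hb := hω0 b
    split_ifs with h
    · have h1 := mul_le_mul_of_nonneg_left (mul_max_inv_sqrt_le r (ω b) hr' hb)
        (show 0 ≤ C * ε by positivity)
      have h2 : 0 ≤ ε / r := by positivity
      rw [hεb]
      nlinarith
    · have h1 : 0 ≤ ω b * ε + C * ε * (ω b + (ω b + 1 / r) / 2) := by positivity
      linarith
  calc ∑ i, ν i * ((⨆ j, A i j) - A i (π i))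
      ≤ ∑ i, ν i * (if ε / r ≤ ω (g i) then C * εb (g i) + ε else 1) :=
        Finset.sum_le_sum fun i _ => mul_le_mul_of_nonneg_left (hgap i) (hν0 i)
    _ = ∑ b, ω b * (if ε / r ≤ ω b then C * εb b + ε else 1) :=
        hblock fun b => if ε / r ≤ ω b then C * εb b + ε else 1
    _ ≤ ∑ b, (ε / r + ω b * ε + C * ε * (ω b + (ω b + 1 / r) / 2)) :=
        Finset.sum_le_sum fun b _ => hterm b
    _ = 2 * (C + 1) * ε := by
        simp only [Finset.sum_add_distrib, ← Finset.mul_sum, ← Finset.sum_mul,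
          ← Finset.sum_div, hω1, Finset.sum_const, Finset.card_univ, Fintype.card_fin,
          nsmul_eq_mul]
        field_simp
        ring
end

section
/- Let r, S, K be positive integers and δ ∈ (0,1) with r·S·K/δ ≥ e, and set χ = 16·log(r·S·K/δ). Let ε ∈ (0, 1/2] and L = r·(S+K)·χ/ε². Let ω ∈ [ε/r, 1], set ε_b = max{1, 1/√(r·ω)}·ε and n = ⌈log₂(1/ε_b²)⌉. Then: (i) n ≥ 1; (ii) 2^n < 2/ε_b²; and (iii) (L·ω/2 − S·(2^n − 1))/2^n ≥ K·log(r·S·K/δ). -/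
/-!
Everything rests on two bounds on the accuracy `ε_b`: with `t = rω ≥ ε`, one has `ε_b² ≤ 1/2`
(as `ε_b²` is `ε²` or `ε²/t ≤ ε`) and `ε² ≤ ε_b² t`. The first gives `n ≥ 1`, and the definition
of the ceiling gives `2^n < 2/ε_b²`. The second then gives `2^n < 2t/ε²`, so with
`ℓ = log(rSK/δ) ≥ 1` the budget satisfies `Lω/2 = 8ℓ(S+K)t/ε² ≥ 4ℓ(S+K)2^n`, which covers both
`S(2^n - 1)` and `Kℓ2^n`.
-/

/-- Two-sided control of the block accuracy `max 1 (1/√t) * ε` for a rescaled mass `t ≥ ε`. -/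
lemma block_accuracy_bounds {ε t : ℝ} (hε0 : 0 < ε) (hε1 : ε ≤ 1 / 2) (ht : ε ≤ t) :
    0 < max 1 (1 / Real.sqrt t) * ε ∧ (max 1 (1 / Real.sqrt t) * ε) ^ 2 ≤ 1 / 2 ∧
      ε ^ 2 ≤ (max 1 (1 / Real.sqrt t) * ε) ^ 2 * t := by
  have ht0 : 0 < t := hε0.trans_le ht
  have hinv : (1 / Real.sqrt t) ^ 2 = 1 / t := by
    rw [div_pow, Real.sq_sqrt ht0.le, one_pow]
  refine ⟨by positivity, ?_, ?_⟩
  · rcases max_choice 1 (1 / Real.sqrt t) with h | h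
    · rw [h]; nlinarith
    · rw [h, mul_pow, hinv, one_div_mul_eq_div, div_le_iff₀ ht0]
      nlinarith
  · have hle : 1 / t ≤ max 1 (1 / Real.sqrt t) ^ 2 := by
      rw [← hinv]
      gcongr
      exact le_max_right _ _
    rw [div_le_iff₀ ht0] at hle
    nlinarith [mul_le_mul_of_nonneg_right hle (sq_nonneg ε)]

lemma one_le_ceil_logb_and_zpow_lt {x : ℝ} (hx : 2 ≤ x) :
    1 ≤ ⌈Real.logb 2 x⌉ ∧ (2 : ℝ) ^ ⌈Real.logb 2 x⌉ < 2 * x := by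
  have hx0 : 0 < x := by linarith
  constructor
  · have h : 0 < Real.logb 2 x := Real.logb_pos (by norm_num) (by linarith)
    exact Int.one_le_ceil_iff.mpr h
  · rw [← Real.rpow_intCast]
    calc (2 : ℝ) ^ (⌈Real.logb 2 x⌉ : ℝ) < 2 ^ (Real.logb 2 x + 1) :=
          Real.rpow_lt_rpow_of_exponent_lt (by norm_num) (Int.ceil_lt_add_one _)
      _ = 2 * x := by
          rw [Real.rpow_add (by norm_num), Real.rpow_logb (by norm_num) (by norm_num) hx0,
            Real.rpow_one, mul_comm]


/-- The deterministic counting chain in the proof of Lemma C.2: with the adaptive accuracy level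
`n = ⌈log₂(1/ε_b²)⌉` for a block of probability mass `ω`, we have `n ≥ 1`, `2^n < 2/ε_b²`, and
the data-collection budget `L = r(S+K)χ/ε²` places at least `K·log(rSK/δ)` context-action pairs
from that block into the level-`n` dataset. -/
theorem stmt4 (r S K : ℕ) (hr : 0 < r) (hS : 0 < S) (hK : 0 < K)
    (δ : ℝ) (hδ0 : 0 < δ) (hδ1 : δ < 1)
    (he : Real.exp 1 ≤ (r : ℝ) * S * K / δ)
    (χ : ℝ) (hχ : χ = 16 * Real.log ((r : ℝ) * S * K / δ))
    (ε : ℝ) (hε0 : 0 < ε) (hε1 : ε ≤ 1 / 2)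
    (L : ℝ) (hL : L = (r : ℝ) * (S + K) * χ / ε ^ 2)
    (ω : ℝ) (hω1 : ε / r ≤ ω) (hω2 : ω ≤ 1)
    (εb : ℝ) (hεb : εb = max 1 (1 / Real.sqrt (r * ω)) * ε)
    (n : ℤ) (hn : n = ⌈Real.logb 2 (1 / εb ^ 2)⌉) :
    1 ≤ n ∧ (2 : ℝ) ^ n < 2 / εb ^ 2 ∧
      (L * ω / 2 - (S : ℝ) * ((2 : ℝ) ^ n - 1)) / (2 : ℝ) ^ n ≥
        (K : ℝ) * Real.log ((r : ℝ) * S * K / δ) := by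
  have hr' : (0 : ℝ) < r := by exact_mod_cast hr
  have hS' : (0 : ℝ) < S := by exact_mod_cast hS
  have hK' : (0 : ℝ) < K := by exact_mod_cast hK
  have ht : ε ≤ r * ω := by rwa [div_le_iff₀' hr'] at hω1
  obtain ⟨hb0, hb1, hb2⟩ := block_accuracy_bounds hε0 hε1 ht
  rw [← hεb] at hb0 hb1 hb2
  have hx : 2 ≤ 1 / εb ^ 2 := by
    rw [le_div_iff₀ (by positivity)]; linarith
  obtain ⟨hn1, hn2⟩ := one_le_ceil_logb_and_zpow_lt hx
  rw [← hn] at hn1 hn2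
  rw [mul_one_div] at hn2
  refine ⟨hn1, hn2, ?_⟩
  have hℓ : 1 ≤ Real.log ((r : ℝ) * S * K / δ) :=
    (Real.le_log_iff_exp_le ((Real.exp_pos 1).trans_le he)).mpr he
  generalize Real.log ((r : ℝ) * S * K / δ) = ℓ at hχ hℓ ⊢
  have hN0 : (0 : ℝ) < 2 ^ n := by positivity
  generalize (2 : ℝ) ^ n = N at hn2 hN0 ⊢
  have hN : N ≤ 2 * (r * ω / ε ^ 2) := by
    have h : 1 / εb ^ 2 ≤ r * ω / ε ^ 2 := by
      rw [div_le_div_iff₀ (by positivity) (by positivity)]; linarith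
    calc N ≤ 2 * (1 / εb ^ 2) := by rw [mul_one_div]; exact hn2.le
      _ ≤ 2 * (r * ω / ε ^ 2) := by gcongr
  have hLω : L * ω / 2 = 4 * ℓ * (S + K) * (2 * (r * ω / ε ^ 2)) := by
    rw [hL, hχ]; ring
  have hbudget : 4 * ℓ * (S + K) * N ≤ L * ω / 2 := by
    rw [hLω]; gcongr
  rw [ge_iff_le, le_div_iff₀ hN0]
  have hSN : S * N ≤ ℓ * (S * N) := le_mul_of_one_le_left (by positivity) hℓ
  have hSℓ : 0 ≤ ℓ * (S * N) := by positivity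
  have hKℓ : 0 ≤ ℓ * (K * N) := by positivity
  linarith
end

section
/- In a context-lumpable bandit, let C ⊆ [S] be a union of blocks, let GOOD ⊆ [K] be nonempty, let D ⊆ C × GOOD be a finite set of context-action pairs, let Â assign a real estimate to each pair in D, let ε̃ > 0, and let b ∈ [r] be a block with B(b) ⊆ C. Assume: (i) |Â(i,j) − A(i,j)| ≤ ε̃/4 for every (i,j) ∈ D; (ii) for every j ∈ GOOD there exists i ∈ B(b) with (i,j) ∈ D; (iii) for every j ∈ [K] and all i, i' with (i,j) ∈ D and (i',j) ∈ D it holds that Â(i,j) − Â(i',j) < ε̃. Define μ̄(j) = max{Â(i,j) : i ∈ C, (i,j) ∈ D} for each j ∈ GOOD. Then any j_b ∈ GOOD with μ(b, j_b) ≥ μ(b, j) for all j ∈ GOOD satisfies max_{j'∈GOOD} μ̄(j') − μ̄(j_b) ≤ 2·ε̃. -/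
/-!
Let `k` attain the maximum `μbar j'`, and let `i'`, `i` be contexts of the block `b` covering `j'`
and `jb`. Homogeneity moves from `k` to `i'` at cost `εt`; concentration at `i'` and `i` costs
`εt / 4` each, and block-optimality of `jb` compares the true means, so
`μbar j' = Ahat k j' < Ahat i' j' + εt ≤ A i' j' + 5 * εt / 4 ≤ A i jb + 5 * εt / 4
  ≤ Ahat i jb + 3 * εt / 2 ≤ μbar jb + 3 * εt / 2`,
which is within the claimed `2 * εt`.
-/

open scoped BigOperators

/-- Deterministic core of Lemma E.3: under concentration (i), coverage (ii), and homogeneity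
(iii), the arm `j_b` that is block-optimal among `GOOD` for a block `b ⊆ C` is never eliminated
by the rule removing arms whose empirical score `μ̄` falls more than `2ε̃` below the best one. -/
theorem stmt5 (S K r : ℕ) (hS : 0 < S) (hK : 0 < K) (hr : 0 < r)
    (A : Fin S → Fin K → ℝ) (hA0 : ∀ i j, 0 ≤ A i j) (hA1 : ∀ i j, A i j ≤ 1)
    (g : Fin S → Fin r)
    (hlump : ∀ i i', g i = g i' → A i = A i')
    (μ : Fin r → Fin K → ℝ) (hμ : ∀ i j, μ (g i) j = A i j)
    (C : Finset (Fin S))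
    (hCblocks : ∀ i i' : Fin S, i ∈ C → g i = g i' → i' ∈ C)
    (GOOD : Finset (Fin K)) (hGOOD : GOOD.Nonempty)
    (D : Finset (Fin S × Fin K)) (hD : D ⊆ C ×ˢ GOOD)
    (Ahat : Fin S → Fin K → ℝ)
    (εt : ℝ) (hεt : 0 < εt)
    (b : Fin r) (hb : ∀ i : Fin S, g i = b → i ∈ C)
    (hconc : ∀ i j, (i, j) ∈ D → |Ahat i j - A i j| ≤ εt / 4)
    (hcover : ∀ j ∈ GOOD, ∃ i : Fin S, g i = b ∧ (i, j) ∈ D)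
    (hhomog : ∀ j : Fin K, ∀ i i' : Fin S, (i, j) ∈ D → (i', j) ∈ D →
      Ahat i j - Ahat i' j < εt)
    (μbar : Fin K → ℝ)
    (hμbar : ∀ j ∈ GOOD,
      IsGreatest {x : ℝ | ∃ i ∈ C, (i, j) ∈ D ∧ x = Ahat i j} (μbar j))
    (jb : Fin K) (hjb : jb ∈ GOOD) (hopt : ∀ j ∈ GOOD, μ b j ≤ μ b jb) :
    ∀ j' ∈ GOOD, μbar j' - μbar jb ≤ 2 * εt := by
  intro j' hj'
  obtain ⟨k, -, hkD, hk⟩ := (hμbar j' hj').1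
  obtain ⟨i', hi', hi'D⟩ := hcover j' hj'
  obtain ⟨i, hi, hiD⟩ := hcover jb hjb
  have h_lower : Ahat i jb ≤ μbar jb := (hμbar jb hjb).2 ⟨i, hb i hi, hiD, rfl⟩
  have h_upper : Ahat k j' - Ahat i' j' < εt := hhomog j' k i' hkD hi'D
  have h_opt : A i' j' ≤ A i jb := by
    rw [← hμ, ← hμ, hi', hi]
    exact hopt j' hj'
  have hc' := (abs_le.mp (hconc i' j' hi'D)).2
  have hc := (abs_le.mp (hconc i jb hiD)).1
  linarith
end

section
/- In a context-lumpable bandit, let C ⊆ [S] be a union of blocks, let GOOD ⊆ [K] be nonempty, let D ⊆ C × GOOD be a finite set of context-action pairs, let Â assign a real estimate to each pair in D, let ε̃ > 0, and let b ∈ [r] be a block with B(b) ⊆ C. Assume: (i) |Â(i,j) − A(i,j)| ≤ ε̃/4 for every (i,j) ∈ D; (ii) for every j ∈ GOOD there exists i ∈ B(b) with (i,j) ∈ D; (iii) for every j ∈ [K] and all i, i' with (i,j) ∈ D and (i',j) ∈ D it holds that Â(i,j) − Â(i',j) < ε̃. Define μ̄(j) = max{Â(i,j) : i ∈ C, (i,j)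 ∈ D} for each j ∈ GOOD, and let j_b ∈ GOOD satisfy μ(b, j_b) ≥ μ(b, j) for all j ∈ GOOD. Then every j ∈ GOOD with max_{j'∈GOOD} μ̄(j') − μ̄(j) ≤ 2·ε̃ satisfies μ(b, j_b) − μ(b, j) ≤ (7/2)·ε̃. -/
open scoped BigOperators

/-- Deterministic core of Lemma E.4: under concentration (i), coverage (ii), and homogeneity
(iii), every arm in `GOOD` surviving the phased-elimination step (i.e., whose empirical score
`μ̄` is within `2ε̃` of the best one) is `(7/2)·ε̃`-optimal for the block `b ⊆ C`. -/
theorem stmt6 (S K r : ℕ) (hS : 0 < S) (hK : 0 < K) (hr : 0 < r)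
    (A : Fin S → Fin K → ℝ) (hA0 : ∀ i j, 0 ≤ A i j) (hA1 : ∀ i j, A i j ≤ 1)
    (g : Fin S → Fin r)
    (hlump : ∀ i i', g i = g i' → A i = A i')
    (μ : Fin r → Fin K → ℝ) (hμ : ∀ i j, μ (g i) j = A i j)
    (C : Finset (Fin S))
    (hCblocks : ∀ i i' : Fin S, i ∈ C → g i = g i' → i' ∈ C)
    (GOOD : Finset (Fin K)) (hGOOD : GOOD.Nonempty)
    (D : Finset (Fin S × Fin K)) (hD : D ⊆ C ×ˢ GOOD)
    (Ahat : Fin S → Fin K → ℝ)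
    (εt : ℝ) (hεt : 0 < εt)
    (b : Fin r) (hb : ∀ i : Fin S, g i = b → i ∈ C)
    (hconc : ∀ i j, (i, j) ∈ D → |Ahat i j - A i j| ≤ εt / 4)
    (hcover : ∀ j ∈ GOOD, ∃ i : Fin S, g i = b ∧ (i, j) ∈ D)
    (hhomog : ∀ j : Fin K, ∀ i i' : Fin S, (i, j) ∈ D → (i', j) ∈ D →
      Ahat i j - Ahat i' j < εt)
    (μbar : Fin K → ℝ)
    (hμbar : ∀ j ∈ GOOD,
      IsGreatest {x : ℝ | ∃ i ∈ C, (i, j) ∈ D ∧ x = Ahat i j} (μbar j))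
    (jb : Fin K) (hjb : jb ∈ GOOD) (hopt : ∀ j ∈ GOOD, μ b j ≤ μ b jb) :
    ∀ j ∈ GOOD, (∀ j' ∈ GOOD, μbar j' - μbar j ≤ 2 * εt) →
      μ b jb - μ b j ≤ (7 / 2) * εt := by
  intro j hj hsurv
  obtain ⟨i₁, hi₁, hD₁⟩ := hcover jb hjb
  obtain ⟨i₂, hi₂, hD₂⟩ := hcover j hj
  obtain ⟨i₃, -, hD₃, hmax⟩ := (hμbar j hj).1
  have hA₁ : μ b jb = A i₁ jb := by rw [← hi₁, hμ]
  have hA₂ : μ b j = A i₂ j := by rw [← hi₂, hμ]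
  have hle : Ahat i₁ jb ≤ μbar jb := (hμbar jb hjb).2 ⟨i₁, hb i₁ hi₁, hD₁, rfl⟩
  -- The bound splits as `1/4 + 2 + 1 + 1/4 = 7/2`: concentration at `(i₁, jb)`, survival of `j`,
  -- homogeneity between the maximizer `i₃` and `i₂`, and concentration at `(i₂, j)`.
  linarith [(abs_le.mp (hconc i₁ jb hD₁)).1, (abs_le.mp (hconc i₂ j hD₂)).2,
    hhomog j i₃ i₂ hD₃ hD₂, hsurv jb hjb]
end

section
/- Let m and r be positive integers, let g : [m] → [r], and let v : [m] → ℝ satisfy v(i) = v(i') whenever g(i) = g(i'). Let g₀ > 0 and let v̂ : [m] → ℝ satisfy |v̂(i) − v(i)| ≤ g₀/4 for every i ∈ [m]. Then: (1) for all i, i' with g(i) = g(i') one has |v̂(i) − v̂(i')| ≤ g₀/2; and (2) if there exist i_u, i_l with v(i_u) − v(i_l) > (3r/2)·g₀, then for every enumeration i_1, …, i_m of [m] with v̂(i_1) ≥ v̂(i_2) ≥ … ≥ v̂(i_m) there exists k ∈ {2, …, m} such that v̂(i_{k−1}) − v̂(i_k) ≥ g₀. -/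
/-!
Part (1) is the triangle inequality through the common true value. For part (2), suppose every
consecutive gap of the sorted estimates is below `g₀`. Then the true values along the enumeration
drop by less than `δ = g₀ + 2 · g₀ / 4 = 3 g₀ / 2` at each step, so no window `(t - δ, t]` with
`t` between the two extreme values can be jumped over (`exists_value_in_window`). If the true
values spread over more than `r δ`, the `r + 1` disjoint windows ending at `v iu - j δ`,
`j = 0, …, r`, each contain a true value, which is impossible with only `r` blocks.
-/

/-- Discrete intermediate value property: a finite sequence each of whose steps goes down by less
than `δ` meets every window `(t - δ, t]` whose endpoint `t` lies between an earlier and a later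
value. -/
lemma exists_value_in_window {m : ℕ} (w : Fin m → ℝ) (δ : ℝ)
    (hstep : ∀ (k : ℕ) (hk : k + 1 < m), w ⟨k, Nat.lt_of_succ_lt hk⟩ - w ⟨k + 1, hk⟩ < δ)
    (hδ : 0 < δ) (a b : Fin m) (hab : a ≤ b) (t : ℝ) (ha : t ≤ w a) (hb : w b ≤ t) :
    ∃ i, t - δ < w i ∧ w i ≤ t := by
  by_contra! hno
  -- If the window is missed, the sequence stays above `t` from `a` on.
  have above : ∀ n : ℕ, a.val ≤ n → ∀ hn : n < m, t < w ⟨n, hn⟩ := by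
    intro n han
    induction n, han using Nat.le_induction with
    | base => exact fun _ => hno a (by linarith)
    | succ n _ ih =>
      intro hn
      exact hno _ (by linarith [hstep n hn, ih (Nat.lt_of_succ_lt hn)])
  exact absurd hb (not_le.mpr (above b hab b.isLt))

/-- Deterministic core of the clustering guarantee (Lemma E.5): with estimates `v̂` accurate to
`g₀/4` of block-constant values `v`, (1) two contexts of the same block have estimates within
`g₀/2`, and (2) if two contexts' true values differ by more than `(3r/2)·g₀`, then any
enumeration sorting the estimates in decreasing order contains a consecutive gap of size
at least `g₀`. -/
theorem stmt7 (m r : ℕ) (hm : 0 < m) (hr : 0 < r)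
    (g : Fin m → Fin r) (v : Fin m → ℝ)
    (hconst : ∀ i i', g i = g i' → v i = v i')
    (g₀ : ℝ) (hg₀ : 0 < g₀)
    (vhat : Fin m → ℝ) (hvhat : ∀ i, |vhat i - v i| ≤ g₀ / 4) :
    (∀ i i' : Fin m, g i = g i' → |vhat i - vhat i'| ≤ g₀ / 2) ∧
    ((∃ iu il : Fin m, v iu - v il > (3 * r / 2) * g₀) →
      ∀ e : Fin m → Fin m, Function.Bijective e →
        (∀ k l : Fin m, k ≤ l → vhat (e l) ≤ vhat (e k)) →
        ∃ (k : ℕ) (hk : k + 1 < m),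
          g₀ ≤ vhat (e ⟨k, Nat.lt_of_succ_lt hk⟩) - vhat (e ⟨k + 1, hk⟩)) := by
  have close : ∀ i, v i - g₀ / 4 ≤ vhat i ∧ vhat i ≤ v i + g₀ / 4 := fun i => by
    have := abs_le.mp (hvhat i)
    constructor <;> linarith
  refine ⟨fun i i' h => ?_, ?_⟩
  · have := hconst i i' h
    rw [abs_le]
    constructor <;> linarith [(close i).1, (close i).2, (close i').1, (close i').2]
  rintro ⟨iu, il, hgap⟩ e he hsort
  by_contra! hno
  obtain ⟨a, rfl⟩ := he.surjective iu
  obtain ⟨b, rfl⟩ := he.surjective il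
  have hr1 : (1 : ℝ) ≤ r := by exact_mod_cast hr
  have hrg : g₀ ≤ r * g₀ := le_mul_of_one_le_left hg₀.le hr1
  -- The true values differ by more than the total estimation error, so `a` precedes `b`.
  have hab : a ≤ b := by
    by_contra! h
    linarith [hsort b a h.le, (close (e a)).1, (close (e b)).2]
  have hwin : ∀ j : Fin (r + 1), ∃ i, v (e a) - j * (3 / 2 * g₀) - 3 / 2 * g₀ < v (e i) ∧
      v (e i) ≤ v (e a) - j * (3 / 2 * g₀) := by
    intro j
    have hj : (j : ℝ) ≤ r := by exact_mod_cast Nat.lt_succ_iff.mp j.isLt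
    have hj' : (j : ℝ) * (3 / 2 * g₀) ≤ r * (3 / 2 * g₀) :=
      mul_le_mul_of_nonneg_right hj (by positivity)
    have hj0 : 0 ≤ (j : ℝ) * (3 / 2 * g₀) := by positivity
    refine exists_value_in_window (fun i => v (e i)) (3 / 2 * g₀) (fun k hk => ?_)
      (by positivity) a b hab _ (by linarith) (by linarith)
    linarith [hno k hk, (close (e ⟨k, Nat.lt_of_succ_lt hk⟩)).1, (close (e ⟨k + 1, hk⟩)).2]
  choose f hf using hwin
  obtain ⟨j, j', hne, hblock⟩ :=
    Fintype.exists_ne_map_eq_of_card_lt (fun j => g (e (f j))) (by simp)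
  have hv := hconst _ _ hblock
  -- Windows with different indices are disjoint.
  have disj : ∀ p q : Fin (r + 1), p < q → v (e (f p)) ≠ v (e (f q)) := by
    intro p q hpq heq
    have h1 : (p : ℝ) + 1 ≤ q := by exact_mod_cast hpq
    have h2 : ((p : ℝ) + 1) * (3 / 2 * g₀) ≤ q * (3 / 2 * g₀) :=
      mul_le_mul_of_nonneg_right h1 (by positivity)
    linarith [(hf p).1, (hf q).2]
  rcases lt_or_gt_of_ne hne with h | h
  · exact disj j j' h hv
  · exact disj j' j h hv.symm
end
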